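/- Let Φ be a set of functional dependencies over a finite schema 𝓡, and let P be an ordered partition of 𝓡 induced by the preorder P⁺ obtained from Φ. Let P' = [C'_1,…,C'_k] be any ordered partition of 𝓡 that properly refines P, i.e., every class of P' is contained in some class of P and at least one class of P is not a class of P'. Then Φ is not forward repairable over P'. (Theorem 1(ii) of the paper: a partition induced by P⁺ is maximally refined among forward-repairable partitions.) -/

import Mathlib

/-- A functional dependency over a set of attributes `α`: a pair `X → a`
with left-hand side `X` (a finite set of attributes) and right-hand side `a`. -/
structure FD (α : Type*) where
  lhs : Finset α
  rhs : α

/-- The projection `Φ[Z]` of a set of FDs over a set of attributes `Z`. -/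
def proj {α : Type*} (Φ : Set (FD α)) (Z : Finset α) : Set (FD α) :=
  {φ | φ ∈ Φ ∧ φ.lhs ⊆ Z ∧ φ.rhs ∈ Z}

/-- The prefix union `S_i = C_1 ∪ … ∪ C_i` of an ordered partition. -/
def prefS {α : Type*} [DecidableEq α] (P : List (Finset α)) (i : ℕ) : Finset α :=
  (P.take i).foldr (· ∪ ·) ∅

/-- `P = [C_1, …, C_m]` is an ordered partition of the (finite) schema:
a list of pairwise disjoint nonempty classes whose union is the whole schema. -/
def OrderedPartition {α : Type*} [DecidableEq α] [Fintype α] (P : List (Finset α)) : Prop :=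
  (∀ C ∈ P, C.Nonempty) ∧ P.Pairwise Disjoint ∧ P.foldr (· ∪ ·) ∅ = Finset.univ

/-- `Φ` is forward repairable over `P`: for every `i`, every FD in
`Φ[S_i] \ Φ[S_{i-1}]` has its right-hand side in `C_i`. -/
def ForwardRepairable {α : Type*} [DecidableEq α] (P : List (Finset α)) (Φ : Set (FD α)) : Prop :=
  ∀ (i : ℕ) (h : i < P.length),
    ∀ φ ∈ proj Φ (prefS P (i + 1)) \ proj Φ (prefS P i), φ.rhs ∈ P.get ⟨i, h⟩

/-- The base relation `P_Φ` obtained from a set of FDs: it contains all pairs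
`(a, a)` and all pairs `(b, a)` with `b ∈ X` for some FD `X → a` in `Φ`. -/
def PPhi {α : Type*} (Φ : Set (FD α)) : α → α → Prop :=
  fun b a => b = a ∨ ∃ φ ∈ Φ, φ.rhs = a ∧ b ∈ φ.lhs

/-- The preorder `P⁺` obtained from `Φ`: the transitive closure of `P_Φ`. -/
def Pplus {α : Type*} (Φ : Set (FD α)) : α → α → Prop :=
  Relation.TransGen (PPhi Φ)

/-- The equivalence `a ≡_{P⁺} a'`: mutual `P⁺`-comparability. -/
def eqvP {α : Type*} (Φ : Set (FD α)) (a a' : α) : Prop :=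
  Pplus Φ a a' ∧ Pplus Φ a' a

/-- The ordered partition `P` is induced by the preorder `P⁺` obtained from `Φ`:
its classes are exactly the equivalence classes of `≡_{P⁺}`, and earlier classes
are never `P⁺`-above later ones. -/
def InducedBy {α : Type*} (P : List (Finset α)) (Φ : Set (FD α)) : Prop :=
  (∀ a a' : α, eqvP Φ a a' ↔
      ∃ (i : ℕ) (h : i < P.length), a ∈ P.get ⟨i, h⟩ ∧ a' ∈ P.get ⟨i, h⟩) ∧
  (∀ (i j : ℕ) (hi : i < P.length) (hj : j < P.length), i < j →
      ∀ a ∈ P.get ⟨i, hi⟩, ∀ a' ∈ P.get ⟨j, hj⟩, ¬ Pplus Φ a' a)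

theorem mem_foldr_union {α : Type*} [DecidableEq α] {L : List (Finset α)} {x : α} :
    x ∈ L.foldr (· ∪ ·) ∅ ↔ ∃ C ∈ L, x ∈ C := by
  induction L with
  | nil => simp
  | cons C L ih => simp [ih]

theorem mem_prefS {α : Type*} [DecidableEq α] {P : List (Finset α)} {n : ℕ} {x : α} :
    x ∈ prefS P n ↔ ∃ (i : ℕ) (h : i < P.length), i < n ∧ x ∈ P[i] := by
  rw [prefS, mem_foldr_union]
  constructor
  · rintro ⟨C, hC, hx⟩
    obtain ⟨i, hi, rfl⟩ := List.mem_take_iff_getElem.mp hC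
    exact ⟨i, by omega, by omega, hx⟩
  · rintro ⟨i, h, hn, hx⟩
    exact ⟨P[i], List.mem_take_iff_getElem.mpr ⟨i, by omega, rfl⟩, hx⟩

theorem prefS_mono {α : Type*} [DecidableEq α] (P : List (Finset α)) : Monotone (prefS P) := by
  intro m n hmn x hx
  obtain ⟨i, h, hi, hx⟩ := mem_prefS.mp hx
  exact mem_prefS.mpr ⟨i, h, hi.trans_le hmn, hx⟩

theorem OrderedPartition.index_unique {α : Type*} [DecidableEq α] [Fintype α]
    {P : List (Finset α)} (hP : OrderedPartition P) {x : α} {i j : ℕ} (hi : i < P.length)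
    (hj : j < P.length) (hxi : x ∈ P[i]) (hxj : x ∈ P[j]) : i = j := by
  have hd := List.pairwise_iff_getElem.mp hP.2.1
  rcases lt_trichotomy i j with h | h | h
  · exact (Finset.disjoint_left.mp (hd i j hi hj h) hxi hxj).elim
  · exact h
  · exact (Finset.disjoint_left.mp (hd j i hj hi h) hxj hxi).elim

theorem OrderedPartition.exists_mem {α : Type*} [DecidableEq α] [Fintype α]
    {P : List (Finset α)} (hP : OrderedPartition P) (x : α) :
    ∃ (i : ℕ) (h : i < P.length), x ∈ P[i] := by
  obtain ⟨C, hC, hx⟩ := mem_foldr_union.mp (hP.2.2 ▸ Finset.mem_univ x)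
  obtain ⟨i, hi, rfl⟩ := List.mem_iff_getElem.mp hC
  exact ⟨i, hi, hx⟩

theorem OrderedPartition.prefS_length {α : Type*} [DecidableEq α] [Fintype α]
    {P : List (Finset α)} (hP : OrderedPartition P) : prefS P P.length = Finset.univ := by
  rw [prefS, List.take_length, hP.2.2]

/-- Over a forward repairable partition, an FD whose right-hand side lies in a prefix union
has its left-hand side in that prefix union as well. -/
theorem ForwardRepairable.lhs_subset_prefS {α : Type*} [DecidableEq α] [Fintype α]
    {P : List (Finset α)} {Φ : Set (FD α)} (hP : OrderedPartition P)
    (hF : ForwardRepairable P Φ) {φ : FD α} (hφ : φ ∈ Φ) {n : ℕ} (hn : φ.rhs ∈ prefS P n) :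
    φ.lhs ⊆ prefS P n := by
  classical
  have hex : ∃ i, φ ∈ proj Φ (prefS P i) :=
    ⟨P.length, hφ, by simp [hP.prefS_length], by simp [hP.prefS_length]⟩
  have hspec := Nat.find_spec hex
  have hle : Nat.find hex ≤ P.length :=
    Nat.find_min' hex ⟨hφ, by simp [hP.prefS_length], by simp [hP.prefS_length]⟩
  have hmin := fun m => Nat.find_min (m := m) hex
  generalize Nat.find hex = k at hspec hle hmin
  cases k with
  | zero => simpa [prefS] using hspec.2.2
  | succ j =>
    have hrhs : φ.rhs ∈ P[j] := hF j hle φ ⟨hspec, hmin j j.lt_succ_self⟩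
    obtain ⟨i, hi, hin, hmem⟩ := mem_prefS.mp hn
    obtain rfl := hP.index_unique hi hle hmem hrhs
    exact hspec.2.1.trans (prefS_mono P hin)

theorem ForwardRepairable.mem_prefS_of_Pplus {α : Type*} [DecidableEq α] [Fintype α]
    {P : List (Finset α)} {Φ : Set (FD α)} (hP : OrderedPartition P)
    (hF : ForwardRepairable P Φ) {n : ℕ} {a b : α} (hba : Pplus Φ b a) (ha : a ∈ prefS P n) :
    b ∈ prefS P n := by
  have step : ∀ {x y : α}, PPhi Φ x y → y ∈ prefS P n → x ∈ prefS P n := by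
    rintro x y (rfl | ⟨φ, hφ, rfl, hx⟩) hy
    · exact hy
    · exact hF.lhs_subset_prefS hP hφ hy hx
  induction hba with
  | single h => exact step h ha
  | tail _ h ih => exact ih (step h ha)

/-- The classes of a forward repairable partition are unions of `≡_{P⁺}`-classes. -/
theorem ForwardRepairable.mem_of_eqvP {α : Type*} [DecidableEq α] [Fintype α]
    {P : List (Finset α)} {Φ : Set (FD α)} (hP : OrderedPartition P)
    (hF : ForwardRepairable P Φ) {a b : α} (hab : eqvP Φ a b) {i : ℕ} (hi : i < P.length)
    (ha : a ∈ P[i]) : b ∈ P[i] := by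
  obtain ⟨j, hj, hji, hbj⟩ := mem_prefS.mp
    (hF.mem_prefS_of_Pplus hP hab.2 (mem_prefS.mpr ⟨i, hi, i.lt_succ_self, ha⟩))
  obtain ⟨k, hk, hkj, hak⟩ := mem_prefS.mp
    (hF.mem_prefS_of_Pplus hP hab.1 (mem_prefS.mpr ⟨j, hj, j.lt_succ_self, hbj⟩))
  obtain rfl := hP.index_unique hi hk ha hak
  obtain rfl : j = i := by omega
  exact hbj

/-- Theorem 1(ii): a partition induced by `P⁺` is maximally refined among
forward-repairable partitions: no ordered partition `P'` that properly refines
`P` (every class of `P'` lies in some class of `P`, and some class of `P` is not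
a class of `P'`) is forward repairable for `Φ`. -/
theorem induced_maximally_refined {α : Type*} [DecidableEq α] [Fintype α]
    (Φ : Set (FD α)) (P P' : List (Finset α))
    (hP : OrderedPartition P)
    (hind : InducedBy P Φ)
    (hP' : OrderedPartition P')
    (hrefines : ∀ C' ∈ P', ∃ C ∈ P, C' ⊆ C)
    (hproper : ∃ C ∈ P, C ∉ P') :
    ¬ ForwardRepairable P' Φ := by
  intro hF
  obtain ⟨C, hC, hCP'⟩ := hproper
  obtain ⟨a, haC⟩ := hP.1 C hC
  obtain ⟨i, hi, hai⟩ := hP'.exists_mem a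
  obtain ⟨D, hD, hsub⟩ := hrefines P'[i] (List.getElem_mem hi)
  obtain ⟨m, hm, rfl⟩ := List.mem_iff_getElem.mp hC
  obtain ⟨n, hn, rfl⟩ := List.mem_iff_getElem.mp hD
  obtain rfl := hP.index_unique hm hn haC (hsub hai)
  have hsup : P[m] ⊆ P'[i] := fun c hc =>
    hF.mem_of_eqvP hP' ((hind.1 a c).mpr ⟨m, hm, haC, hc⟩) hi hai
  exact hCP' (hsup.antisymm hsub ▸ List.getElem_mem hi)
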